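/- arXiv:2307.08497 — 2 statements merged into one kernel-verified Lean document; each statement's English description precedes it below -/
import Mathlib

section
/- Let 𝓗 be a minor-closed class of graphs and let X ∉ 𝓗 be a graph. Then for every k ∈ ℕ, every (≥k)-subdivision of X has radial 𝓗-width at least k/4. -/
open SimpleGraph

namespace RadialPaper

variable {V W N : Type*}

/-- The ball of radius `r` around a set `U` of vertices of `G`. -/
def ballSet (G : SimpleGraph V) (U : Set V) (r : ℕ) : Set V :=
  {v | ∃ u ∈ U, G.edist u v ≤ (r : ℕ∞)}

/-- `G` has radius at most `r`: some vertex has distance at most `r` from every vertex.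
The empty graph has radius `0`; a nonempty disconnected graph has radius `∞`, hence
satisfies `radiusLE` for no `r`. -/
def radiusLE (G : SimpleGraph V) (r : ℕ) : Prop :=
  Nonempty V → ∃ v : V, ∀ w : V, G.edist v w ≤ (r : ℕ∞)

/-- `(Hg, B)` is a graph-decomposition of `G` modelled on `Hg`. -/
def IsGraphDecomp (G : SimpleGraph V) (Hg : SimpleGraph N) (B : N → Set V) : Prop :=
  (∀ v : V, ∃ h : N, v ∈ B h) ∧
  (∀ ⦃u v : V⦄, G.Adj u v → ∃ h : N, u ∈ B h ∧ v ∈ B h) ∧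
  (∀ v : V, (Hg.induce {h : N | v ∈ B h}).Connected)

/-- A subgraph `X` of `G` is `c`-quasi-geodesic. -/
def IsQuasiGeodesic (G : SimpleGraph V) (X : G.Subgraph) (c : ℕ) : Prop :=
  ∀ u v : X.verts, X.coe.edist u v ≤ (c : ℕ∞) * G.edist (u : V) (v : V)

/-- The subgraph `Y` of `G` is a `(≥ k)`-subdivision of the graph `X`. -/
def IsSubdivGE (k : ℕ) (X : SimpleGraph W) {G : SimpleGraph V} (Y : G.Subgraph) : Prop :=
  ∃ (f : W → V) (p : ∀ ⦃u v : W⦄, X.Adj u v → G.Walk (f u) (f v)),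
    Function.Injective f ∧
    (∀ ⦃u v : W⦄ (h : X.Adj u v), (p h).IsPath) ∧
    (∀ ⦃u v : W⦄ (h : X.Adj u v), k + 1 ≤ (p h).length) ∧
    (∀ ⦃u v : W⦄ (h : X.Adj u v), p h.symm = (p h).reverse) ∧
    (∀ ⦃u v : W⦄ (h : X.Adj u v) (w : W), f w ∈ (p h).support → w = u ∨ w = v) ∧
    (∀ ⦃u v u' v' : W⦄ (h : X.Adj u v) (h' : X.Adj u' v'), s(u, v) ≠ s(u', v') →
      ∀ x : V, x ∈ (p h).support → x ∈ (p h').support →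
        (x = f u ∨ x = f v) ∧ (x = f u' ∨ x = f v')) ∧
    Y.verts = Set.range f ∪ {x : V | ∃ (u v : W) (h : X.Adj u v), x ∈ (p h).support} ∧
    Y.edgeSet = {e : Sym2 V | ∃ (u v : W) (h : X.Adj u v), e ∈ (p h).edges}

/-- `G` contains a `(≥ k)`-subdivision of `X` as a `c`-quasi-geodesic subgraph. -/
def ContainsQuasiGeodesicSubdivGE (G : SimpleGraph V) (k : ℕ) (X : SimpleGraph W) (c : ℕ) :
    Prop :=
  ∃ Y : G.Subgraph, IsSubdivGE k X Y ∧ IsQuasiGeodesic G Y c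

/-- `X` is a minor of `Hg`. -/
def IsMinorOf (X : SimpleGraph W) (Hg : SimpleGraph N) : Prop :=
  ∃ B : W → Set N, (∀ w, (B w).Nonempty) ∧ (∀ w, (Hg.induce (B w)).Connected) ∧
    (∀ ⦃w w' : W⦄, w ≠ w' → Disjoint (B w) (B w')) ∧
    (∀ ⦃w w' : W⦄, X.Adj w w' → ∃ a ∈ B w, ∃ b ∈ B w', Hg.Adj a b)

/-- A class of (finite) graphs, given on the canonical vertex sets `Fin n`, is minor-closed. -/
def MinorClosed (ℋ : ∀ n : ℕ, SimpleGraph (Fin n) → Prop) : Prop :=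
  ∀ ⦃m n : ℕ⦄ (X : SimpleGraph (Fin m)) (Hg : SimpleGraph (Fin n)),
    ℋ n Hg → IsMinorOf X Hg → ℋ m X

/-- The triangle `K³`. -/
def triangleGraph : SimpleGraph (Fin 3) := ⊤

/-- The claw `K_{1,3}`, with centre `0`. -/
def clawGraph : SimpleGraph (Fin 4) := SimpleGraph.fromRel (fun a _ => a = 0)

/-- The wrench graph: two adjacent vertices `0, 1` of degree three, with leaves `2,3` and
`4,5` respectively. -/
def wrenchGraph : SimpleGraph (Fin 6) :=
  SimpleGraph.fromRel (fun a b =>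
    (a = 0 ∧ b = 1) ∨ (a = 0 ∧ b = 2) ∨ (a = 0 ∧ b = 3) ∨ (a = 1 ∧ b = 4) ∨ (a = 1 ∧ b = 5))

/-- The star `K_{1,m}`, with centre `none`. -/
def starGraph (m : ℕ) : SimpleGraph (Option (Fin m)) :=
  SimpleGraph.fromRel (fun a _ => a = none)

/-- `Hg` is a disjoint union of paths: every connected component is a path. -/
def IsUnionOfPaths (Hg : SimpleGraph N) : Prop :=
  ∀ cc : Hg.ConnectedComponent, ∃ m : ℕ,
    Nonempty (Hg.induce cc.supp ≃g SimpleGraph.pathGraph m)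

/-- `Hg` is a disjoint union of cycles: every connected component is a cycle. -/
def IsUnionOfCycles (Hg : SimpleGraph N) : Prop :=
  ∀ cc : Hg.ConnectedComponent, ∃ m : ℕ, 3 ≤ m ∧
    Nonempty (Hg.induce cc.supp ≃g SimpleGraph.cycleGraph m)

/-- `Hg` is a subdivided star, i.e. a `(≥ 0)`-subdivision of some star `K_{1,m}`. -/
def IsSubdividedStar (Hg : SimpleGraph N) : Prop :=
  ∃ m : ℕ, IsSubdivGE 0 (starGraph m) (⊤ : Hg.Subgraph)

/-- `Hg` is a disjoint union of subdivided stars. -/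
def IsUnionOfSubdividedStars (Hg : SimpleGraph N) : Prop :=
  ∀ cc : Hg.ConnectedComponent, IsSubdividedStar (Hg.induce cc.supp)

/-- A graph-decomposition is honest: bags of adjacent nodes intersect. -/
def Honest (Hg : SimpleGraph N) (B : N → Set V) : Prop :=
  ∀ ⦃h h' : N⦄, Hg.Adj h h' → (B h ∩ B h').Nonempty

/-- The outer-radial width of a decomposition of `G` is at most `r`. -/
def OuterRadialWidthLE (G : SimpleGraph V) (B : N → Set V) (r : ℕ) : Prop :=
  ∀ h : N, ∃ z : V, ∀ v ∈ B h, G.edist z v ≤ (r : ℕ∞)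

/-- The radial spread of a decomposition `(Hg, B)` of a graph with vertex set `V`
is at most `r`. -/
def RadialSpreadLE (Hg : SimpleGraph N) (B : N → Set V) (r : ℕ) : Prop :=
  ∀ v : V, radiusLE (Hg.induce {h : N | v ∈ B h}) r

/-- `φ` is an `(m, a, M, A, r)`-quasi-isometry from `Hg` to `G`. -/
def IsQuasiIsometry (Hg : SimpleGraph N) (G : SimpleGraph V) (m a M A r : ℕ)
    (φ : N → V) : Prop :=
  (∀ h h' : N, Hg.edist h h' ≤ (m : ℕ∞) * G.edist (φ h) (φ h') + (a : ℕ∞)) ∧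
  (∀ h h' : N, G.edist (φ h) (φ h') ≤ (M : ℕ∞) * Hg.edist h h' + (A : ℕ∞)) ∧
  (∀ v : V, ∃ h : N, G.edist v (φ h) ≤ (r : ℕ∞))

/-- `C` is a connected component of `G - S`: a maximal connected set of vertices
disjoint from `S`. -/
def IsCompOf (G : SimpleGraph V) (C S : Set V) : Prop :=
  C.Nonempty ∧ Disjoint C S ∧ (G.induce C).Connected ∧
  ∀ D : Set V, C ⊆ D → Disjoint D S → (G.induce D).Connected → D = C

/-- The subgraph `P` of `G` is an `M₀`–`M₁` path meeting `C`. -/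
def IsM01Path (G : SimpleGraph V) (M₀ M₁ C : Set V) (P : G.Subgraph) : Prop :=
  ∃ (x y : V) (q : G.Walk x y), q.IsPath ∧ q.toSubgraph = P ∧ x ∈ M₀ ∧ y ∈ M₁ ∧
    (∀ z ∈ q.support, z ≠ x → z ≠ y → z ∉ M₀ ∪ M₁) ∧ ∃ z ∈ q.support, z ∈ C

/-- The number of `M₀`–`M₁` paths meeting `C` that are contained in the subgraph `OS`. -/
noncomputable def Wcount (G : SimpleGraph V) (M₀ M₁ C : Set V) (OS : G.Subgraph) : ℕ :=
  Set.ncard {P : G.Subgraph | P ≤ OS ∧ IsM01Path G M₀ M₁ C P}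

/-!
Let `G` be a `(≥ k)`-subdivision of `X` with an `Hg`-decomposition into parts of radius at most `r`,
where `4 r < k`; we find `X` as a minor of `Hg`. The nodes of `Hg` whose bag meets a fixed connected
set of vertices form a connected set, so both the `r`-balls around the branch vertices of `G` and
the subdivided edges with these balls removed become connected sets of nodes. As every bag lies
within distance `r` of its centre, two vertex sets whose `r`-neighbourhoods are disjoint give rise
to disjoint sets of nodes. Distinct branch vertices are more than `4 r` apart, so the balls give
disjoint sets of nodes. A walk can leave a subdivided edge only through one of its two branch
vertices, so the `r`-neighbourhood of a truncated subdivided edge stays inside that edge; hence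
truncated edges give sets of nodes that are disjoint from one another and from those of the balls
at all non-incident branch vertices. Such a system of sets contracts to `X`.
-/

section Balls

variable {G : SimpleGraph V} {U : Set V} {r s : ℕ} {v : V}

lemma mem_ballSet_iff_exists_walk :
    v ∈ ballSet G U r ↔ ∃ u ∈ U, ∃ q : G.Walk u v, q.length ≤ r := by
  refine exists_congr fun u => and_congr_right fun _ => ⟨fun h => ?_, fun ⟨q, hq⟩ => ?_⟩
  · obtain ⟨q, hq⟩ := exists_walk_of_edist_ne_top (ne_top_of_le_ne_top (ENat.natCast_ne_top r) h)
    exact ⟨q, by rwa [← hq, Nat.cast_le] at h⟩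
  · exact (edist_le q).trans (by exact_mod_cast hq)

lemma mem_ballSet_singleton_iff_exists_walk {u : V} :
    v ∈ ballSet G {u} r ↔ ∃ q : G.Walk u v, q.length ≤ r := by
  simp [mem_ballSet_iff_exists_walk]

lemma subset_ballSet : U ⊆ ballSet G U r := fun u hu => ⟨u, hu, by simp⟩

lemma ballSet_ballSet_subset : ballSet G (ballSet G U r) s ⊆ ballSet G U (r + s) := by
  intro w hw
  obtain ⟨v, hv, hvw⟩ := hw
  obtain ⟨u, hu, huv⟩ := hv
  exact ⟨u, hu, SimpleGraph.edist_triangle.trans (by exact_mod_cast add_le_add huv hvw)⟩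

lemma connected_induce_ballSet (hU : (G.induce U).Connected) :
    (G.induce (ballSet G U r)).Connected := by
  classical
  obtain ⟨⟨u₀, hu₀⟩⟩ := hU.nonempty
  refine induce_connected_of_patches u₀ (subset_ballSet hu₀) fun {v} hv => ?_
  obtain ⟨u, hu, q, hq⟩ := mem_ballSet_iff_exists_walk.mp hv
  have support_subset : {w | w ∈ q.support} ⊆ ballSet G U r := fun w hw =>
    mem_ballSet_iff_exists_walk.mpr
      ⟨u, hu, q.takeUntil w hw, (q.length_takeUntil_le_length hw).trans hq⟩
  exact ⟨U ∪ {w | w ∈ q.support}, Set.union_subset subset_ballSet support_subset,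
    Or.inl hu₀, Or.inr q.end_mem_support,
    (induce_union_connected hU.preconnected q.connected_induce_support.preconnected
      ⟨u, hu, q.start_mem_support⟩).preconnected _ _⟩

end Balls

lemma connected_induce_image_getVert_Icc {G : SimpleGraph V} {u v : V} (p : G.Walk u v) {a b : ℕ}
    (hab : a ≤ b) (hb : b ≤ p.length) : (G.induce (p.getVert '' Set.Icc a b)).Connected := by
  induction b, hab using Nat.le_induction with
  | base =>
    rw [Set.Icc_self, Set.image_singleton]
    exact Connected.of_subsingleton
  | succ b hab ih =>
    have image_succ : p.getVert '' Set.Icc a (b + 1) =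
        p.getVert '' Set.Icc a b ∪ {p.getVert b, p.getVert (b + 1)} := by
      rw [← Set.image_pair, ← Set.image_union]
      congr 1
      ext i
      simp only [Set.mem_Icc, Set.mem_union, Set.mem_insert_iff, Set.mem_singleton_iff]
      omega
    rw [image_succ]
    exact induce_union_connected (ih (by omega)).preconnected
      (induce_pair_connected_of_adj (p.adj_getVert_succ hb)).preconnected
      ⟨p.getVert b, Set.mem_image_of_mem _ (Set.right_mem_Icc.mpr hab), Or.inl rfl⟩

section Minors

variable {Hg : SimpleGraph N} {A S U : Set N}

lemma exists_walk_to_neighbor_of_set {a b : N} (q : Hg.Walk a b) (ha : a ∉ U) (hb : b ∈ U) :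
    ∃ (c : N) (q' : Hg.Walk a c),
      (∀ t ∈ q'.support, t ∈ q.support ∧ t ∉ U) ∧ ∃ d ∈ U, Hg.Adj c d := by
  induction q with
  | nil => exact absurd hb ha
  | @cons a v b hav q ih =>
    by_cases hv : v ∈ U
    · exact ⟨a, Walk.nil, by simp [ha], v, hv, hav⟩
    · obtain ⟨c, q', hq', hc⟩ := ih hv hb
      refine ⟨c, Walk.cons hav q', ?_, hc⟩
      simp only [Walk.support_cons, List.mem_cons, forall_eq_or_imp, true_or, ha,
        not_false_eq_true, and_self, true_and]
      exact fun t ht => ⟨Or.inr (hq' t ht).1, (hq' t ht).2⟩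

lemma exists_connected_extension_adj (hA : (Hg.induce A).Connected)
    (hS : (Hg.induce S).Preconnected) (hSA : (S ∩ A).Nonempty) (hSU : (S ∩ U).Nonempty)
    (hAU : Disjoint A U) :
    ∃ P ⊆ S, Disjoint P U ∧ (Hg.induce (A ∪ P)).Connected ∧ ∃ c ∈ P, ∃ d ∈ U, Hg.Adj c d := by
  obtain ⟨a, haS, haA⟩ := hSA
  obtain ⟨b, hbS, hbU⟩ := hSU
  obtain ⟨q⟩ := hS ⟨a, haS⟩ ⟨b, hbS⟩
  obtain ⟨c, q', hq', hc⟩ := exists_walk_to_neighbor_of_set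
    (q.map (Embedding.induce S).toHom) (Set.disjoint_left.mp hAU haA) hbU
  refine ⟨{t | t ∈ q'.support}, fun t ht => ?_, Set.disjoint_left.mpr fun t ht => (hq' t ht).2,
    induce_union_connected hA.preconnected q'.connected_induce_support.preconnected
      ⟨a, haA, q'.start_mem_support⟩, c, q'.end_mem_support, hc⟩
  obtain ⟨t', -, rfl⟩ := List.mem_map.mp (Walk.support_map _ q ▸ (hq' t ht).1)
  exact t'.2

lemma isMinorOf_of_upward_connectors [LinearOrder W] {X : SimpleGraph W} (U : W → Set N)
    (P : ∀ ⦃x y : W⦄, X.Adj x y → Set N)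
    (hU : ∀ x, (Hg.induce (U x)).Connected)
    (hUP : ∀ ⦃x y⦄ (h : X.Adj x y), x < y → (Hg.induce (U x ∪ P h)).Connected)
    (hUU : ∀ ⦃x y⦄, x ≠ y → Disjoint (U x) (U y))
    (hPU : ∀ ⦃x y⦄ (h : X.Adj x y) ⦃w⦄, x < y → w ≠ x → Disjoint (P h) (U w))
    (hPP : ∀ ⦃x y x' y'⦄ (h : X.Adj x y) (h' : X.Adj x' y'), x < y → x' < y' → x ≠ x' →
      Disjoint (P h) (P h'))
    (hadj : ∀ ⦃x y⦄ (h : X.Adj x y), x < y → ∃ c ∈ P h, ∃ d ∈ U y, Hg.Adj c d) :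
    IsMinorOf X Hg := by
  let T : W → Set N := fun x => {c | c ∈ U x ∨ ∃ y, ∃ h : X.Adj x y, x < y ∧ c ∈ P h}
  have U_subset_T (x : W) : U x ⊆ T x := fun _ => Or.inl
  have T_connected (x : W) : (Hg.induce (T x)).Connected := by
    obtain ⟨⟨a, ha⟩⟩ := (hU x).nonempty
    refine induce_connected_of_patches a (Or.inl ha) fun {c} hc => ?_
    rcases hc with hc | ⟨y, h, hxy, hc⟩
    · exact ⟨U x, U_subset_T x, ha, hc, (hU x).preconnected _ _⟩
    · exact ⟨U x ∪ P h, Set.union_subset (U_subset_T x) fun c hc => Or.inr ⟨y, h, hxy, hc⟩,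
        Or.inl ha, Or.inr hc, (hUP h hxy).preconnected _ _⟩
  have T_disjoint {x x' : W} (hne : x ≠ x') : Disjoint (T x) (T x') := by
    refine Set.disjoint_left.mpr ?_
    rintro c (hc | ⟨y, h, hxy, hc⟩) (hc' | ⟨y', h', hxy', hc'⟩)
    · exact Set.disjoint_left.mp (hUU hne) hc hc'
    · exact Set.disjoint_left.mp (hPU h' hxy' hne) hc' hc
    · exact Set.disjoint_left.mp (hPU h hxy hne.symm) hc hc'
    · exact Set.disjoint_left.mp (hPP h h' hxy hxy' hne) hc hc'
  have T_adj_of_lt {x y : W} (h : X.Adj x y) (hxy : x < y) :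
      ∃ a ∈ T x, ∃ b ∈ T y, Hg.Adj a b := by
    obtain ⟨c, hc, d, hd, hcd⟩ := hadj h hxy
    exact ⟨c, Or.inr ⟨y, h, hxy, hc⟩, d, Or.inl hd, hcd⟩
  refine ⟨T, fun x => Set.nonempty_coe_sort.mp (T_connected x).nonempty, T_connected,
    fun _ _ => T_disjoint, fun x y h => ?_⟩
  rcases lt_or_gt_of_ne h.ne with hxy | hyx
  · exact T_adj_of_lt h hxy
  · obtain ⟨a, ha, b, hb, hab⟩ := T_adj_of_lt h.symm hyx
    exact ⟨b, hb, a, ha, hab.symm⟩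

-- Orient every edge of `X` along a linear order and let its smaller end absorb the part of `S`
-- that leads up to the branch set of its larger end.
theorem isMinorOf_of_connected_sets {X : SimpleGraph W} (U : W → Set N)
    (S : ∀ ⦃x y : W⦄, X.Adj x y → Set N)
    (hU : ∀ x, (Hg.induce (U x)).Connected)
    (hS : ∀ ⦃x y⦄ (h : X.Adj x y), (Hg.induce (S h)).Preconnected)
    (hS_left : ∀ ⦃x y⦄ (h : X.Adj x y), (S h ∩ U x).Nonempty)
    (hS_right : ∀ ⦃x y⦄ (h : X.Adj x y), (S h ∩ U y).Nonempty)
    (hUU : ∀ ⦃x y⦄, x ≠ y → Disjoint (U x) (U y))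
    (hSS : ∀ ⦃x y x' y'⦄ (h : X.Adj x y) (h' : X.Adj x' y'), s(x, y) ≠ s(x', y') →
      Disjoint (S h) (S h'))
    (hSU : ∀ ⦃x y⦄ (h : X.Adj x y) ⦃w⦄, w ≠ x → w ≠ y → Disjoint (S h) (U w)) :
    IsMinorOf X Hg := by
  obtain ⟨_, -⟩ := exists_wellFoundedLT W
  choose P hPS hPU hP_conn hP_adj using fun ⦃x y⦄ (h : X.Adj x y) =>
    exists_connected_extension_adj (hU x) (hS h) (hS_left h) (hS_right h) (hUU h.ne)
  refine isMinorOf_of_upward_connectors U P hU (fun _ _ h _ => hP_conn h) hUU ?_ ?_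
    fun _ _ h _ => hP_adj h
  · intro x y h w _ hwx
    by_cases hwy : w = y
    · exact hwy ▸ hPU h
    · exact (hSU h hwx hwy).mono_left (hPS h)
  · intro x y x' y' h h' hxy hxy' hne
    have edge_ne : s(x, y) ≠ s(x', y') := by
      rw [Ne, Sym2.eq_iff]
      rintro (⟨rfl, -⟩ | ⟨rfl, rfl⟩)
      · exact hne rfl
      · exact lt_asymm hxy hxy'
    exact (hSS h h' edge_ne).mono (hPS h) (hPS h')

end Minors

/-- The nodes of a graph-decomposition with bags `B` whose bag meets the vertex set `A`. It
transfers connected sets of vertices to connected sets of nodes. -/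
def nodesMeeting (B : N → Set V) (A : Set V) : Set N :=
  {h | (A ∩ B h).Nonempty}

section Decompositions

variable {G : SimpleGraph V} {Hg : SimpleGraph N} {B : N → Set V} {A A' : Set V}

lemma IsGraphDecomp.reachable_nodesMeeting (hB : IsGraphDecomp G Hg B) {a b : A}
    (q : (G.induce A).Walk a b) {h h' : N} (ha : (a : V) ∈ B h) (hb : (b : V) ∈ B h') :
    (Hg.induce (nodesMeeting B A)).Reachable ⟨h, a, a.2, ha⟩ ⟨h', b, b.2, hb⟩ := by
  have nodes_subset (v : A) : {i | (v : V) ∈ B i} ⊆ nodesMeeting B A :=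
    fun _ hi => ⟨v, v.2, hi⟩
  have reachable_of_mem {v : A} {i j : N} (hi : (v : V) ∈ B i) (hj : (v : V) ∈ B j) :
      (Hg.induce (nodesMeeting B A)).Reachable ⟨i, v, v.2, hi⟩ ⟨j, v, v.2, hj⟩ :=
    ((hB.2.2 v).preconnected ⟨i, hi⟩ ⟨j, hj⟩).map
      (induceHomOfLE Hg (nodes_subset v)).toHom
  induction q generalizing h with
  | nil => exact reachable_of_mem ha hb
  | cons hadj _ ih =>
    obtain ⟨i, hu, hv⟩ := hB.2.1 (induce_adj.mp hadj)
    exact (reachable_of_mem ha hu).trans (ih hv hb)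

lemma IsGraphDecomp.connected_nodesMeeting (hB : IsGraphDecomp G Hg B)
    (hA : (G.induce A).Connected) : (Hg.induce (nodesMeeting B A)).Connected := by
  obtain ⟨a⟩ := hA.nonempty
  obtain ⟨h, ha⟩ := hB.1 a
  rw [connected_iff_exists_forall_reachable]
  refine ⟨⟨h, a, a.2, ha⟩, ?_⟩
  rintro ⟨h', b, hbA, hb⟩
  obtain ⟨q⟩ := hA.preconnected a ⟨b, hbA⟩
  exact hB.reachable_nodesMeeting q ha hb

lemma IsGraphDecomp.nodesMeeting_inter_nonempty_of_adj (hB : IsGraphDecomp G Hg B) {u v : V}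
    (huv : G.Adj u v) (hu : u ∈ A) (hv : v ∈ A') :
    (nodesMeeting B A ∩ nodesMeeting B A').Nonempty :=
  let ⟨h, huB, hvB⟩ := hB.2.1 huv
  ⟨h, ⟨u, hu, huB⟩, ⟨v, hv, hvB⟩⟩

lemma disjoint_nodesMeeting_of_disjoint_ballSet {r : ℕ}
    (hr : ∀ h, radiusLE (G.induce (B h)) r)
    (hAA' : Disjoint (ballSet G A r) (ballSet G A' r)) :
    Disjoint (nodesMeeting B A) (nodesMeeting B A') := by
  refine Set.disjoint_left.mpr ?_
  rintro h ⟨a, haA, ha⟩ ⟨a', haA', ha'⟩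
  obtain ⟨z, hz⟩ := hr h ⟨⟨a, ha⟩⟩
  have edist_center_le {v : V} (hv : v ∈ B h) : G.edist v z ≤ r := by
    have hzv := hz ⟨v, hv⟩
    obtain ⟨q, hq⟩ := exists_walk_of_edist_ne_top (ne_top_of_le_ne_top (ENat.natCast_ne_top r) hzv)
    rw [edist_comm]
    refine (edist_le (q.map (Embedding.induce (B h)).toHom)).trans ?_
    rwa [Walk.length_map, hq]
  exact Set.disjoint_left.mp hAA' ⟨a, haA, edist_center_le ha⟩ ⟨a', haA', edist_center_le ha'⟩

end Decompositions

/-- The data exhibiting `G`, up to isolated vertices, as a `(≥ k)`-subdivision of `X`: the branch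
vertices together with, for every orientation of an edge of `X`, the path replacing that edge. -/
structure Subdivision (k : ℕ) (X : SimpleGraph W) (G : SimpleGraph V) where
  branch : W → V
  path : ∀ ⦃x y : W⦄, X.Adj x y → G.Walk (branch x) (branch y)
  branch_injective : Function.Injective branch
  isPath : ∀ ⦃x y⦄ (h : X.Adj x y), (path h).IsPath
  lt_length : ∀ ⦃x y⦄ (h : X.Adj x y), k < (path h).length
  path_symm : ∀ ⦃x y⦄ (h : X.Adj x y), path h.symm = (path h).reverse
  eq_or_eq_of_branch_mem : ∀ ⦃x y⦄ (h : X.Adj x y) (w : W),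
    branch w ∈ (path h).support → w = x ∨ w = y
  eq_branch_of_mem_of_mem : ∀ ⦃x y x' y'⦄ (h : X.Adj x y) (h' : X.Adj x' y'),
    s(x, y) ≠ s(x', y') → ∀ v, v ∈ (path h).support → v ∈ (path h').support →
      v = branch x ∨ v = branch y
  exists_mem_edges_of_adj : ∀ ⦃u v⦄, G.Adj u v →
    ∃ (x y : W) (h : X.Adj x y), s(u, v) ∈ (path h).edges

lemma IsSubdivGE.nonempty_subdivision {k : ℕ} {X : SimpleGraph W} {G : SimpleGraph V}
    (hG : IsSubdivGE k X (⊤ : G.Subgraph)) : Nonempty (Subdivision k X G) := by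
  obtain ⟨f, p, hf, hpath, hlen, hsymm, hbranch, hdisj, -, hedges⟩ := hG
  refine ⟨⟨f, p, hf, hpath, hlen, hsymm, hbranch,
    fun _ _ _ _ h h' hne v hv hv' => (hdisj h h' hne v hv hv').1, fun u v huv => ?_⟩⟩
  have : s(u, v) ∈ (⊤ : G.Subgraph).edgeSet := huv
  rwa [hedges] at this

namespace Subdivision

variable {k : ℕ} {X : SimpleGraph W} {G : SimpleGraph V} (S : Subdivision k X G)
  {x y x' y' w : W} {u v z : V} {i r s : ℕ}

lemma getVert_path_symm (h : X.Adj x y) (i : ℕ) :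
    (S.path h.symm).getVert i = (S.path h).getVert ((S.path h).length - i) := by
  rw [S.path_symm, Walk.getVert_reverse]

lemma length_path_symm (h : X.Adj x y) : (S.path h.symm).length = (S.path h).length := by
  rw [S.path_symm, Walk.length_reverse]

lemma getVert_inj (h : X.Adj x y) {j : ℕ} (hi : i ≤ (S.path h).length)
    (hj : j ≤ (S.path h).length) :
    (S.path h).getVert i = (S.path h).getVert j ↔ i = j :=
  (S.isPath h).getVert_injOn.eq_iff hi hj

lemma getVert_ne_branch (h : X.Adj x y) (hi₀ : 0 < i) (hi : i < (S.path h).length) :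
    (S.path h).getVert i ≠ S.branch w := by
  intro heq
  rcases S.eq_or_eq_of_branch_mem h w (heq ▸ Walk.getVert_mem_support _ i) with rfl | rfl
  · exact hi₀.ne' (((S.isPath h).getVert_eq_start_iff hi.le).mp heq)
  · exact hi.ne (((S.isPath h).getVert_eq_end_iff hi.le).mp heq)

lemma exists_consecutive_getVert_of_adj (huv : G.Adj u v) :
    ∃ (x y : W) (h : X.Adj x y) (i : ℕ), i < (S.path h).length ∧
      (S.path h).getVert i = u ∧ (S.path h).getVert (i + 1) = v := by
  obtain ⟨x, y, h, he⟩ := S.exists_mem_edges_of_adj huv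
  obtain ⟨i, hi, he⟩ := (Walk.mk_mem_edges_iff_exists _).mp he
  rcases Sym2.eq_iff.mp he with ⟨rfl, rfl⟩ | ⟨rfl, rfl⟩
  · exact ⟨x, y, h, i, hi, rfl, rfl⟩
  · refine ⟨y, x, h.symm, (S.path h).length - (i + 1), ?_, ?_, ?_⟩
    · rw [S.length_path_symm h]
      omega
    all_goals
      rw [S.getVert_path_symm h]
      congr 1
      omega

lemma exists_getVert_one_of_branch_adj (hv : G.Adj (S.branch x) v) :
    ∃ (y : W) (h : X.Adj x y), (S.path h).getVert 1 = v := by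
  obtain ⟨a, b, h, i, hi, hx, rfl⟩ := S.exists_consecutive_getVert_of_adj hv
  obtain rfl : i = 0 := by
    by_contra hi₀
    exact S.getVert_ne_branch h (Nat.pos_of_ne_zero hi₀) hi hx
  rw [Walk.getVert_zero] at hx
  obtain rfl := S.branch_injective hx
  exact ⟨b, h, rfl⟩

lemma eq_getVert_succ_or_pred_of_adj (h : X.Adj x y) (hi₀ : 0 < i)
    (hi : i < (S.path h).length) (hv : G.Adj ((S.path h).getVert i) v) :
    v = (S.path h).getVert (i + 1) ∨ v = (S.path h).getVert (i - 1) := by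
  obtain ⟨a, b, h', j, hj, hij, rfl⟩ := S.exists_consecutive_getVert_of_adj hv
  have same_edge : s(x, y) = s(a, b) := by
    by_contra hne
    rcases S.eq_branch_of_mem_of_mem h h' hne _ (Walk.getVert_mem_support _ i)
      (hij ▸ Walk.getVert_mem_support _ j) with heq | heq <;>
    exact S.getVert_ne_branch h hi₀ hi heq
  rcases Sym2.eq_iff.mp same_edge with ⟨rfl, rfl⟩ | ⟨rfl, rfl⟩
  · rw [S.getVert_inj h hj.le hi.le] at hij
    exact Or.inl (by rw [hij])
  · rw [S.length_path_symm h] at hj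
    rw [S.getVert_path_symm h, S.getVert_inj h (Nat.sub_le _ _) hi.le] at hij
    rw [S.getVert_path_symm h, ← hij, Nat.sub_sub]
    exact Or.inr rfl

/-- The part of the subdivided edge `h` at path-distance more than `r` from both its ends. In
particular `S.middle h 0` is the interior of the subdivided edge. -/
def middle (h : X.Adj x y) (r : ℕ) : Set V :=
  (S.path h).getVert '' Set.Ioo r ((S.path h).length - r)

lemma middle_symm (h : X.Adj x y) (r : ℕ) : S.middle h.symm r = S.middle h r := by
  have middle_subset {a b : W} (g : X.Adj a b) : S.middle g.symm r ⊆ S.middle g r := by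
    rintro _ ⟨i, ⟨hri, hi⟩, rfl⟩
    rw [S.length_path_symm g] at hi
    exact ⟨(S.path g).length - i, ⟨by omega, by omega⟩, (S.getVert_path_symm g i).symm⟩
  exact (middle_subset h).antisymm (middle_subset h.symm)

lemma connected_induce_middle (h : X.Adj x y) (hr : 2 * r < k) :
    (G.induce (S.middle h r)).Connected := by
  have hk := S.lt_length h
  have Ioo_eq_Icc : Set.Ioo r ((S.path h).length - r) =
      Set.Icc (r + 1) ((S.path h).length - r - 1) := by
    ext i
    simp only [Set.mem_Ioo, Set.mem_Icc]
    omega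
  rw [middle, Ioo_eq_Icc]
  exact connected_induce_image_getVert_Icc _ (by omega) (by omega)

lemma disjoint_middle_zero (h : X.Adj x y) (h' : X.Adj x' y') (hne : s(x, y) ≠ s(x', y')) :
    Disjoint (S.middle h 0) (S.middle h' 0) := by
  refine Set.disjoint_left.mpr ?_
  rintro _ ⟨i, ⟨hi₀, hi⟩, rfl⟩ ⟨j, -, hij⟩
  rcases S.eq_branch_of_mem_of_mem h h' hne _ (Walk.getVert_mem_support _ i)
    (hij ▸ Walk.getVert_mem_support _ j) with heq | heq <;>
  exact S.getVert_ne_branch h hi₀ hi heq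

lemma branch_notMem_middle_zero (h : X.Adj x y) : S.branch w ∉ S.middle h 0 := by
  rintro ⟨i, ⟨hi₀, hi⟩, heq⟩
  exact S.getVert_ne_branch h hi₀ hi heq

lemma branch_mem_support_of_notMem_middle_zero (h : X.Adj x y) (q : G.Walk u z)
    (hi : i ≤ (S.path h).length) (hu : (S.path h).getVert i = u) (hz : z ∉ S.middle h 0) :
    (S.branch x ∈ q.support ∧ i ≤ q.length) ∨
      (S.branch y ∈ q.support ∧ (S.path h).length ≤ i + q.length) := by
  have of_eq_zero {u : V} (q : G.Walk u z) (hu : (S.path h).getVert 0 = u) :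
      S.branch x ∈ q.support := by
    rw [← (S.path h).getVert_zero, hu]
    exact q.start_mem_support
  have of_eq_length {u : V} (q : G.Walk u z) (hu : (S.path h).getVert (S.path h).length = u) :
      S.branch y ∈ q.support := by
    nth_rw 1 [← (S.path h).getVert_length, hu]
    exact q.start_mem_support
  induction q generalizing i with
  | nil =>
    have : i = 0 ∨ i = (S.path h).length := by
      by_contra! hends
      exact hz ⟨i, ⟨by omega, by omega⟩, hu⟩
    rcases this with rfl | rfl
    · exact Or.inl ⟨of_eq_zero _ hu, Nat.zero_le _⟩
    · exact Or.inr ⟨of_eq_length _ hu, Nat.le_add_right _ _⟩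
  | cons hadj q ih =>
    have : i = 0 ∨ i = (S.path h).length ∨ (0 < i ∧ i < (S.path h).length) := by omega
    rcases this with rfl | rfl | ⟨hi₀, hi'⟩
    · exact Or.inl ⟨of_eq_zero _ hu, Nat.zero_le _⟩
    · exact Or.inr ⟨of_eq_length _ hu, Nat.le_add_right _ _⟩
    · rw [Walk.support_cons, Walk.length_cons]
      rcases S.eq_getVert_succ_or_pred_of_adj h hi₀ hi' (hu ▸ hadj) with hv | hv
      all_goals
        refine (ih (by omega) hv.symm hz of_eq_zero of_eq_length).imp ?_ ?_ <;>
        exact fun ⟨hmem, _⟩ => ⟨List.mem_cons_of_mem _ hmem, by omega⟩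

lemma ballSet_middle_subset (h : X.Adj x y) : ballSet G (S.middle h r) r ⊆ S.middle h 0 := by
  intro z hz
  by_contra hz₀
  obtain ⟨_, ⟨i, ⟨hri, hi⟩, rfl⟩, q, hq⟩ := mem_ballSet_iff_exists_walk.mp hz
  rcases S.branch_mem_support_of_notMem_middle_zero h q (by omega) rfl hz₀ with
    ⟨-, hlen⟩ | ⟨-, hlen⟩ <;>
  omega

lemma lt_length_of_walk_branch (hxw : x ≠ w) (q : G.Walk (S.branch x) (S.branch w)) :
    k < q.length := by
  classical
  obtain ⟨v, hadj, q', hq'⟩ := Walk.exists_eq_cons_of_ne (S.branch_injective.ne hxw) q.bypass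
  have branch_notMem : S.branch x ∉ q'.support :=
    ((Walk.cons_isPath_iff hadj q').mp (hq' ▸ q.bypass_isPath)).2
  have length_le : q'.length + 1 ≤ q.length := by
    rw [← Walk.length_cons hadj, ← hq']
    exact q.length_bypass_le_length
  obtain ⟨y, h, hv⟩ := S.exists_getVert_one_of_branch_adj hadj
  have hk := S.lt_length h
  rcases S.branch_mem_support_of_notMem_middle_zero h q' (by omega) hv
    (S.branch_notMem_middle_zero h) with ⟨hmem, -⟩ | ⟨-, hlen⟩
  · exact absurd hmem branch_notMem
  · omega

lemma disjoint_ballSet_branch (hxw : x ≠ w) (hs : 2 * s ≤ k) :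
    Disjoint (ballSet G {S.branch x} s) (ballSet G {S.branch w} s) := by
  refine Set.disjoint_left.mpr fun v hvx hvw => ?_
  obtain ⟨q, hq⟩ := mem_ballSet_singleton_iff_exists_walk.mp hvx
  obtain ⟨q', hq'⟩ := mem_ballSet_singleton_iff_exists_walk.mp hvw
  have hlt := S.lt_length_of_walk_branch hxw (q.append q'.reverse)
  rw [Walk.length_append, Walk.length_reverse] at hlt
  omega

lemma disjoint_middle_zero_ballSet_branch (h : X.Adj x y) (hwx : w ≠ x) (hwy : w ≠ y)
    (hs : s ≤ k) : Disjoint (S.middle h 0) (ballSet G {S.branch w} s) := by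
  classical
  refine Set.disjoint_left.mpr ?_
  rintro _ ⟨i, ⟨-, hi⟩, rfl⟩ hv
  obtain ⟨q, hq⟩ := mem_ballSet_singleton_iff_exists_walk.mp hv
  have branch_notMem {a : W} (haw : w ≠ a) : S.branch a ∉ q.support := fun hmem => by
    have hlt := S.lt_length_of_walk_branch haw (q.takeUntil _ hmem)
    have hle := q.length_takeUntil_le_length hmem
    omega
  rcases S.branch_mem_support_of_notMem_middle_zero h q.reverse hi.le rfl
    (S.branch_notMem_middle_zero h) with ⟨hmem, -⟩ | ⟨hmem, -⟩
  · exact branch_notMem hwx (by simpa using hmem)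
  · exact branch_notMem hwy (by simpa using hmem)

section Nodes

variable {Hg : SimpleGraph N} {B : N → Set V}

lemma nodesMeeting_middle_inter_ballSet_nonempty (hB : IsGraphDecomp G Hg B) (h : X.Adj x y)
    (hr : 2 * r < k) :
    (nodesMeeting B (S.middle h r) ∩ nodesMeeting B (ballSet G {S.branch x} r)).Nonempty := by
  have hk := S.lt_length h
  rw [Set.inter_comm]
  refine hB.nodesMeeting_inter_nonempty_of_adj
    ((S.path h).adj_getVert_succ (i := r) (by omega)) ?_ ⟨r + 1, ⟨by omega, by omega⟩, rfl⟩
  exact mem_ballSet_singleton_iff_exists_walk.mpr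
    ⟨(S.path h).take r, by simp [Walk.take_length]⟩

theorem isMinorOf (S : Subdivision k X G) (hB : IsGraphDecomp G Hg B)
    (hr : ∀ h, radiusLE (G.induce (B h)) r) (hrk : 4 * r < k) : IsMinorOf X Hg := by
  refine isMinorOf_of_connected_sets (fun x => nodesMeeting B (ballSet G {S.branch x} r))
    (fun _ _ h => nodesMeeting B (S.middle h r)) ?_ ?_ ?_ ?_ ?_ ?_ ?_
  · exact fun x => hB.connected_nodesMeeting (connected_induce_ballSet Connected.of_subsingleton)
  · exact fun x y h =>
      (hB.connected_nodesMeeting (S.connected_induce_middle h (by omega))).preconnected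
  · exact fun x y h => S.nodesMeeting_middle_inter_ballSet_nonempty hB h (by omega)
  · intro x y h
    rw [← S.middle_symm h]
    exact S.nodesMeeting_middle_inter_ballSet_nonempty hB h.symm (by omega)
  · exact fun x y hxy => disjoint_nodesMeeting_of_disjoint_ballSet hr
      ((S.disjoint_ballSet_branch hxy (by omega)).mono
        ballSet_ballSet_subset ballSet_ballSet_subset)
  · exact fun x y x' y' h h' hne => disjoint_nodesMeeting_of_disjoint_ballSet hr
      ((S.disjoint_middle_zero h h' hne).mono
        (S.ballSet_middle_subset h) (S.ballSet_middle_subset h'))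
  · exact fun x y h w hwx hwy => disjoint_nodesMeeting_of_disjoint_ballSet hr
      ((S.disjoint_middle_zero_ballSet_branch h hwx hwy (by omega)).mono
        (S.ballSet_middle_subset h) ballSet_ballSet_subset)

end Nodes

end Subdivision

theorem subdivision_of_forbidden_minor_large_radial_width_general {k : ℕ} {X : SimpleGraph W}
    {G : SimpleGraph V} (hsub : IsSubdivGE k X (⊤ : G.Subgraph)) {Hg : SimpleGraph N}
    (hX : ¬ IsMinorOf X Hg) {B : N → Set V} (hB : IsGraphDecomp G Hg B) {r : ℕ}
    (hr : ∀ h, radiusLE (G.induce (B h)) r) : (k : ℚ) / 4 ≤ (r : ℚ) := by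
  obtain ⟨S⟩ := hsub.nonempty_subdivision
  have hkr : k ≤ 4 * r := not_lt.mp fun hrk => hX (S.isMinorOf hB hr hrk)
  have hkr' : (k : ℚ) ≤ 4 * r := by exact_mod_cast hkr
  linarith

/-- Let `ℋ` be a minor-closed class of graphs and `X ∉ ℋ`. Then for
every `k : ℕ`, every `(≥ k)`-subdivision of `X` has radial `ℋ`-width at least `k / 4`. -/
theorem subdivision_of_forbidden_minor_large_radial_width
    (ℋ : ∀ n : ℕ, SimpleGraph (Fin n) → Prop) (hmc : MinorClosed ℋ)
    {m : ℕ} (X : SimpleGraph (Fin m)) (hX : ¬ ℋ m X) (k : ℕ)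
    {V : Type*} [Fintype V] (G : SimpleGraph V)
    (hsub : IsSubdivGE k X (⊤ : G.Subgraph)) :
    ∀ (n : ℕ) (Hg : SimpleGraph (Fin n)) (B : Fin n → Set V), ℋ n Hg →
      IsGraphDecomp G Hg B → ∀ r : ℕ, (∀ h, radiusLE (G.induce (B h)) r) →
      (k : ℚ) / 4 ≤ (r : ℚ) := by
  intro n Hg B hH hB r hr
  exact subdivision_of_forbidden_minor_large_radial_width_general hsub
    (fun hXHg => hX (hmc X Hg hH hXHg)) hB hr

end RadialPaper
end

section
/- Let G be a graph and let H be a c-quasi-geodesic subgraph of G for some c ∈ ℕ. Given r ∈ ℕ, write B_h := B_G(h, r) for h ∈ V(H), and for each h ∈ V(H) set V_h := the union of B_{h'} over all h' ∈ B_H(h, cr + ⌈c/2⌉). Then (H,(V_h)_{h ∈ V(H)}) is an H-decomposition of the induced subgraph G' := G[⋃_{h ∈ V(H)} B_h] of radial width at most (c+1)r + ⌈c/2⌉. -/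
open SimpleGraph

namespace RadialPaper

variable {V W N : Type*}

/-!
Let `R = c * r + ⌈c / 2⌉`. Nodes whose images in `G` are at distance at most `2 * r + 1` are at
distance at most `c * (2 * r + 1) ≤ 2 * R` in the quasi-geodesic subgraph, and this is all that
the decomposition axioms need. For adjacent `x`, `y` lying in the balls around `a` and `b`, the
middle vertex of a shortest `a`–`b` path is a node whose bag contains both. The nodes whose bags
contain a given `x` form the `R`-ball around `U = {a | dist (a, x) ≤ r}`; as the points of `U` are
pairwise at distance at most `2 * R`, the shortest paths between them stay in that ball, which is
therefore connected. Finally, the bag of `h` has centre `h`: reach the right node inside the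
subgraph in `R` steps, then the target in `r` steps, without leaving the bag.
-/

section Edist

variable {G : SimpleGraph V} {H : SimpleGraph W} {u v w : V}

theorem exists_walk_length_le_of_edist_le {n : ℕ} (h : G.edist u v ≤ n) :
    ∃ p : G.Walk u v, p.length ≤ n := by
  obtain ⟨p, hp⟩ := exists_walk_of_edist_ne_top (ne_top_of_le_ne_top (ENat.natCast_ne_top n) h)
  exact ⟨p, by exact_mod_cast hp.trans_le h⟩

theorem edist_add_edist_le_length_of_mem_support (p : G.Walk u v) (hw : w ∈ p.support) :
    G.edist u w + G.edist w v ≤ p.length := by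
  classical
  calc G.edist u w + G.edist w v
      ≤ (p.takeUntil w hw).length + (p.dropUntil w hw).length :=
        add_le_add (edist_le _) (edist_le _)
    _ = p.length := by rw [← Nat.cast_add, ← Walk.length_append, Walk.take_spec]

theorem exists_edist_le_of_edist_le_add {a b : ℕ} (h : G.edist u v ≤ a + b) :
    ∃ m, G.edist u m ≤ a ∧ G.edist m v ≤ b := by
  obtain ⟨p, hp⟩ := exists_walk_length_le_of_edist_le (n := a + b) (by exact_mod_cast h)
  refine ⟨p.getVert a, (edist_le (p.take a)).trans ?_, (edist_le (p.drop a)).trans ?_⟩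
  · rw [Walk.take_length]
    exact_mod_cast min_le_left ..
  · rw [Walk.drop_length]
    exact_mod_cast Nat.sub_le_iff_le_add'.2 hp

theorem edist_map_le (f : G →g H) (u v : V) : H.edist (f u) (f v) ≤ G.edist u v :=
  le_iInf fun p => by simpa using edist_le (p.map f)

theorem edist_induce_le_length {s : Set V} (p : G.Walk u v) (hp : ∀ x ∈ p.support, x ∈ s) :
    (G.induce s).edist ⟨u, hp u p.start_mem_support⟩ ⟨v, hp v p.end_mem_support⟩ ≤ p.length := by
  have hlength : (p.induce s hp).length = p.length :=
    (Walk.length_map _ _).symm.trans (congrArg Walk.length (p.map_induce hp))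
  exact hlength ▸ edist_le (p.induce s hp)

end Edist

section BallSet

variable {G : SimpleGraph V} {U : Set V} {n : ℕ}

theorem subset_ballSet_s14 (G : SimpleGraph V) (U : Set V) (n : ℕ) : U ⊆ ballSet G U n :=
  fun u hu => ⟨u, hu, by simp⟩

theorem mem_ballSet_of_mem_support {u v x : V} (hu : u ∈ U) (p : G.Walk u v) (hp : p.length ≤ n)
    (hx : x ∈ p.support) : x ∈ ballSet G U n :=
  ⟨u, hu, calc
    G.edist u x ≤ G.edist u x + G.edist x v := le_self_add
    _ ≤ p.length := edist_add_edist_le_length_of_mem_support p hx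
    _ ≤ n := by exact_mod_cast hp⟩

theorem mem_ballSet_of_mem_support_of_length_le {u v x : V} (hu : u ∈ U) (hv : v ∈ U)
    (p : G.Walk u v) (hp : p.length ≤ 2 * n + 1) (hx : x ∈ p.support) : x ∈ ballSet G U n := by
  by_contra hfar
  have hux : ((n + 1 : ℕ) : ℕ∞) ≤ G.edist u x :=
    Order.add_one_le_of_lt (lt_of_not_ge fun h => hfar ⟨u, hu, h⟩)
  have hxv : ((n + 1 : ℕ) : ℕ∞) ≤ G.edist x v :=
    Order.add_one_le_of_lt (lt_of_not_ge fun h => hfar ⟨v, hv, edist_comm.trans_le h⟩)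
  have hlength : n + 1 + (n + 1) ≤ p.length := by
    exact_mod_cast (add_le_add hux hxv).trans (edist_add_edist_le_length_of_mem_support p hx)
  omega

theorem connected_induce_ballSet_s14 (hU : U.Nonempty)
    (hdiam : ∀ a ∈ U, ∀ b ∈ U, G.edist a b ≤ 2 * n + 1) :
    (G.induce (ballSet G U n)).Connected := by
  obtain ⟨a, ha⟩ := hU
  refine (connected_iff_exists_forall_reachable _).2 ⟨⟨a, subset_ballSet_s14 G U n ha⟩, ?_⟩
  rintro ⟨x, b, hb, hbx⟩
  obtain ⟨p, hp⟩ := exists_walk_length_le_of_edist_le (n := 2 * n + 1)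
    (by exact_mod_cast hdiam a ha b hb)
  obtain ⟨q, hq⟩ := exists_walk_length_le_of_edist_le hbx
  have hpball : ∀ z ∈ p.support, z ∈ ballSet G U n := fun _ =>
    mem_ballSet_of_mem_support_of_length_le ha hb p hp
  have hqball : ∀ z ∈ q.support, z ∈ ballSet G U n := fun _ =>
    mem_ballSet_of_mem_support hb q hq
  exact (p.induce _ hpball).reachable.trans (q.induce _ hqball).reachable

end BallSet

section Radius

variable {G : SimpleGraph V} {H : SimpleGraph W} {n : ℕ}

theorem radiusLE_of_surjective_hom (f : G →g H) (hf : Function.Surjective f)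
    (hG : radiusLE G n) : radiusLE H n := by
  intro hW
  obtain ⟨v, hv⟩ := hG hf.nonempty
  exact ⟨f v, hf.forall.2 fun w => (edist_map_le f v w).trans (hv w)⟩

theorem radiusLE_induce_image (f : G →g H) {s : Set V} (hs : radiusLE (G.induce s) n) :
    radiusLE (H.induce (f '' s)) n :=
  radiusLE_of_surjective_hom (induceHom f (Set.mapsTo_image f s))
    (Set.surjective_mapsTo_image_restrict f s) hs

theorem radiusLE_induce_induce_preimage_val {s t : Set V} (hts : t ⊆ s)
    (ht : radiusLE (G.induce t) n) :
    radiusLE ((G.induce s).induce (Subtype.val ⁻¹' t)) n :=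
  radiusLE_of_surjective_hom (G := G.induce t) ⟨fun x => ⟨⟨x, hts x.2⟩, x.2⟩, id⟩
    (fun x => ⟨⟨x, x.2⟩, rfl⟩) ht

theorem radiusLE_induce_ballSet {U : Set V} {m : ℕ} (hU : radiusLE (G.induce U) m) (n : ℕ) :
    radiusLE (G.induce (ballSet G U n)) (m + n) := by
  rintro ⟨_, u, hu, _⟩
  obtain ⟨v, hv⟩ := hU ⟨⟨u, hu⟩⟩
  have hsub := subset_ballSet_s14 G U n
  refine ⟨⟨v, hsub v.2⟩, ?_⟩
  rintro ⟨x, w, hw, hwx⟩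
  obtain ⟨p, hp⟩ := exists_walk_length_le_of_edist_le hwx
  calc (G.induce (ballSet G U n)).edist ⟨v, hsub v.2⟩ ⟨x, w, hw, hwx⟩
      ≤ (G.induce (ballSet G U n)).edist ⟨v, hsub v.2⟩ ⟨w, hsub hw⟩ +
        (G.induce (ballSet G U n)).edist ⟨w, hsub hw⟩ ⟨x, w, hw, hwx⟩ :=
        SimpleGraph.edist_triangle
    _ ≤ (G.induce U).edist v ⟨w, hw⟩ + p.length :=
        add_le_add (edist_map_le (G.induceHomOfLE hsub).toHom v ⟨w, hw⟩)
          (edist_induce_le_length p fun _ => mem_ballSet_of_mem_support hw p hp)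
    _ ≤ ((m + n : ℕ) : ℕ∞) := by
        push_cast
        exact add_le_add (hv _) (by exact_mod_cast hp)

theorem radiusLE_induce_ballSet_singleton (G : SimpleGraph V) (v : V) (n : ℕ) :
    radiusLE (G.induce (ballSet G {v} n)) n := by
  have hv : radiusLE (G.induce {v}) 0 := fun _ => ⟨⟨v, rfl⟩, by rintro ⟨_, rfl⟩; simp⟩
  simpa using radiusLE_induce_ballSet hv n

end Radius

section BallBag

variable {G : SimpleGraph V} {Hg : SimpleGraph N} {R r : ℕ}

/-- The bag `V_h` of a node `h`: the union of the balls of radius `r` in `G` around the images of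
the nodes at distance at most `R` from `h`. The nodes are placed in `G` by an arbitrary map `φ`,
which for a subgraph of `G` is the inclusion. -/
def ballBag (G : SimpleGraph V) (Hg : SimpleGraph N) (φ : N → V) (R r : ℕ) (h : N) : Set V :=
  {x | ∃ h', Hg.edist h h' ≤ R ∧ G.edist (φ h') x ≤ r}

theorem ballBag_eq_ballSet (φ : N → V) (h : N) :
    ballBag G Hg φ R r h = ballSet G (φ '' ballSet Hg {h} R) r := by
  simp [ballBag, ballSet]

theorem ballBag_subset_ballSet_range (φ : N → V) (h : N) :
    ballBag G Hg φ R r h ⊆ ballSet G (Set.range φ) r :=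
  fun _ ⟨h', _, hx⟩ => ⟨φ h', ⟨h', rfl⟩, hx⟩

theorem setOf_mem_ballBag (φ : N → V) (x : V) :
    {h | x ∈ ballBag G Hg φ R r h} = ballSet Hg {a | G.edist (φ a) x ≤ r} R := by
  ext h
  simp [ballBag, ballSet, edist_comm (u := h), and_comm]

theorem exists_mem_ballBag_of_adj {φ : N → V}
    (hφ : ∀ a b, G.edist (φ a) (φ b) ≤ 2 * r + 1 → Hg.edist a b ≤ 2 * R) {x y : V}
    (hx : x ∈ ballSet G (Set.range φ) r) (hy : y ∈ ballSet G (Set.range φ) r) (hxy : G.Adj x y) :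
    ∃ h, x ∈ ballBag G Hg φ R r h ∧ y ∈ ballBag G Hg φ R r h := by
  obtain ⟨_, ⟨a, rfl⟩, ha⟩ := hx
  obtain ⟨_, ⟨b, rfl⟩, hb⟩ := hy
  have hab : G.edist (φ a) (φ b) ≤ 2 * r + 1 := calc
    G.edist (φ a) (φ b) ≤ G.edist (φ a) x + G.edist x (φ b) := SimpleGraph.edist_triangle
    _ ≤ G.edist (φ a) x + (G.edist x y + G.edist y (φ b)) := by
      gcongr; exact SimpleGraph.edist_triangle
    _ ≤ r + (1 + r) := by
      rw [edist_eq_one_iff_adj.2 hxy, edist_comm (u := y)]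
      gcongr
    _ = 2 * r + 1 := by ring
  obtain ⟨m, ham, hmb⟩ := exists_edist_le_of_edist_le_add ((hφ a b hab).trans_eq (two_mul _))
  exact ⟨m, ⟨a, edist_comm.trans_le ham, ha⟩, ⟨b, hmb, hb⟩⟩

theorem connected_induce_setOf_mem_ballBag {φ : N → V}
    (hφ : ∀ a b, G.edist (φ a) (φ b) ≤ 2 * r → Hg.edist a b ≤ 2 * R + 1) {x : V}
    (hx : x ∈ ballSet G (Set.range φ) r) :
    (Hg.induce {h | x ∈ ballBag G Hg φ R r h}).Connected := by
  obtain ⟨_, ⟨a, rfl⟩, ha⟩ := hx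
  rw [setOf_mem_ballBag]
  refine connected_induce_ballSet_s14 ⟨a, ha⟩ fun b hb d hd => hφ b d ?_
  calc G.edist (φ b) (φ d) ≤ G.edist (φ b) x + G.edist x (φ d) := SimpleGraph.edist_triangle
    _ ≤ r + r := add_le_add hb (edist_comm.trans_le hd)
    _ = 2 * r := (two_mul _).symm

theorem isGraphDecomp_ballBag {φ : N → V}
    (hφ : ∀ a b, G.edist (φ a) (φ b) ≤ 2 * r + 1 → Hg.edist a b ≤ 2 * R) {S : Set V}
    (hS : S ⊆ ballSet G (Set.range φ) r) :
    IsGraphDecomp (G.induce S) Hg fun h => Subtype.val ⁻¹' ballBag G Hg φ R r h := by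
  refine ⟨?_, fun x y hxy => exists_mem_ballBag_of_adj hφ (hS x.2) (hS y.2) hxy, fun x =>
    connected_induce_setOf_mem_ballBag
      (fun a b hab => (hφ a b (hab.trans le_self_add)).trans le_self_add) (hS x.2)⟩
  intro x
  obtain ⟨_, ⟨h, rfl⟩, hx⟩ := hS x.2
  exact ⟨h, h, by simp, hx⟩

theorem radiusLE_induce_ballBag (φ : Hg →g G) (h : N) :
    radiusLE (G.induce (ballBag G Hg φ R r h)) (R + r) := by
  rw [ballBag_eq_ballSet]
  exact radiusLE_induce_ballSet
    (radiusLE_induce_image φ (radiusLE_induce_ballSet_singleton Hg h R)) r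

end BallBag

theorem IsQuasiGeodesic.coe_edist_le {G : SimpleGraph V} {Hs : G.Subgraph} {c : ℕ}
    (hgeo : IsQuasiGeodesic G Hs c) {r : ℕ} (a b : Hs.verts)
    (hab : G.edist (a : V) (b : V) ≤ 2 * r + 1) :
    Hs.coe.edist a b ≤ 2 * ((c * r + (c + 1) / 2 : ℕ) : ℕ∞) := by
  have hround : c * (2 * r + 1) ≤ 2 * (c * r + (c + 1) / 2) := by
    have : c * (2 * r + 1) = 2 * (c * r) + c := by ring
    omega
  calc Hs.coe.edist a b ≤ c * G.edist (a : V) (b : V) := hgeo a b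
    _ ≤ c * (2 * r + 1) := by gcongr
    _ ≤ 2 * ((c * r + (c + 1) / 2 : ℕ) : ℕ∞) := by exact_mod_cast hround

theorem partial_decomposition_along_quasi_geodesic_subgraph_general
    (G : SimpleGraph V) (Hs : G.Subgraph) (c r : ℕ) (hgeo : IsQuasiGeodesic G Hs c)
    (S : Set V) (hS : S = ballSet G Hs.verts r) (B : Hs.verts → Set S)
    (hB : B = fun h =>
      Subtype.val ⁻¹' ballBag G Hs.coe Subtype.val (c * r + (c + 1) / 2) r h) :
    IsGraphDecomp (G.induce S) Hs.coe B ∧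
      ∀ h, radiusLE ((G.induce S).induce (B h)) ((c + 1) * r + (c + 1) / 2) := by
  rw [← Subtype.range_val (s := Hs.verts)] at hS
  subst hB
  refine ⟨isGraphDecomp_ballBag hgeo.coe_edist_le hS.subset, fun h => ?_⟩
  have hwidth : (c + 1) * r + (c + 1) / 2 = c * r + (c + 1) / 2 + r := by ring
  rw [hwidth]
  exact radiusLE_induce_induce_preimage_val
    ((ballBag_subset_ballSet_range _ h).trans hS.superset) (radiusLE_induce_ballBag Hs.hom h)

/-- Let `Hs` be a `c`-quasi-geodesic subgraph of `G` and `r : ℕ`.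
With `S` the union of the balls `B_G(h, r)` over `h ∈ V(Hs)`, and `V_h` the union of the
balls `B_G(h', r)` over all `h'` in the ball `B_{Hs}(h, c·r + ⌈c/2⌉)`, the family `(V_h)`
is an `Hs`-decomposition of `G[S]` of radial width at most `(c+1)·r + ⌈c/2⌉`. -/
theorem partial_decomposition_along_quasi_geodesic_subgraph
    {V : Type*} [Fintype V] (G : SimpleGraph V) (Hs : G.Subgraph) (c r : ℕ)
    (hgeo : IsQuasiGeodesic G Hs c)
    (S : Set V) (hS : S = {x : V | ∃ h ∈ Hs.verts, G.edist h x ≤ (r : ℕ∞)})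
    (B : Hs.verts → Set S)
    (hB : B = fun h => {x : S | ∃ h' : Hs.verts,
      Hs.coe.edist h h' ≤ ((c * r + (c + 1) / 2 : ℕ) : ℕ∞) ∧
      G.edist (h' : V) (x : V) ≤ (r : ℕ∞)}) :
    IsGraphDecomp (G.induce S) Hs.coe B ∧
      ∀ h, radiusLE ((G.induce S).induce (B h)) ((c + 1) * r + (c + 1) / 2) := by
  exact partial_decomposition_along_quasi_geodesic_subgraph_general G Hs c r hgeo S hS B hB

end RadialPaper
end
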